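/- One-variable residue expansion: for distinct indeterminates x_1, ..., x_n and parameters q, t, the rational function identity Φ(z : X) − 1 = ((1−t)/(1−q)) ∑_{i=1}^n ( w(z : x_i) Φ(X − x_i : x_i) − W(z : x_i) Φ(x_i : X − x_i) ) holds, where for single letters w(z : x) = (z − x/t)/(z − x/q), W(z : x) = (z − qx/t)/(z − x), Φ(z : X) = ∏_{i} ((z − t x_i/q)(z − x_i/t))/((z − x_i)(z − x_i/q)), Φ(X−x_i : x_i) = ∏_{j≠i} ((x_j − t x_i/q)(x_j − x_i/t))/((x_j − x_i)(x_j − x_i/q)), and Φ(x_i : X−x_i) = ∏_{j≠i} ((x_i − t x_j/q)(x_i − x_j/t))/((x_i − x_j)(x_i − x_j/q)). -/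

import Mathlib

/-- The field of rational functions in the indeterminates `x_1, …, x_n, z, q, t`. -/
noncomputable abbrev RatFld (n : ℕ) : Type :=
  FractionRing (MvPolynomial (Fin n ⊕ Fin 3) ℚ)

/-- The indeterminate `x_i` as a rational function. -/
noncomputable def xv (n : ℕ) (i : Fin n) : RatFld n :=
  algebraMap (MvPolynomial (Fin n ⊕ Fin 3) ℚ) (RatFld n) (MvPolynomial.X (Sum.inl i))

/-- The indeterminate `z` as a rational function. -/
noncomputable def zv (n : ℕ) : RatFld n :=
  algebraMap (MvPolynomial (Fin n ⊕ Fin 3) ℚ) (RatFld n) (MvPolynomial.X (Sum.inr 0))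

/-- The parameter `q` as a rational function. -/
noncomputable def qv (n : ℕ) : RatFld n :=
  algebraMap (MvPolynomial (Fin n ⊕ Fin 3) ℚ) (RatFld n) (MvPolynomial.X (Sum.inr 1))

/-- The parameter `t` as a rational function. -/
noncomputable def tv (n : ℕ) : RatFld n :=
  algebraMap (MvPolynomial (Fin n ⊕ Fin 3) ℚ) (RatFld n) (MvPolynomial.X (Sum.inr 2))

/-!
As a rational function of `z`, `Φ(z : X)` equals `1` at `z = ∞` and has simple poles at
`x_i` and `x_i/q`, so partial fractions give
`Φ(z : X) - 1 = (1-t)/(1-q) ∑_i ((w(z : x_i) - 1) Φ(X - x_i : x_i)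
  - (W(z : x_i) - 1) Φ(x_i : X - x_i))`,
where `Φ(x/q : y) = Φ(y : x)` turns the residue at `x_i/q` into `Φ(X - x_i : x_i)`.
It remains to see that `Φ(X - x_i : x_i)` and `Φ(x_i : X - x_i)` have the same sum over `i`;
as `Φ(0 : X) = 1` and `w(0 : x) = W(0 : x) = q/t`, this is the case `z = 0` of the same expansion.
-/

open Finset Function

section PartialFractions

variable {ι K : Type*} [DecidableEq ι] [Field K]

theorem prod_sub_div_sub_eq_one_add_sum {s : Finset ι} {v b : ι → K} {z : K}
    (hv : Set.InjOn v s) (hz : ∀ i ∈ s, z ≠ v i) :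
    ∏ i ∈ s, (z - b i) / (z - v i) =
      1 + ∑ i ∈ s, (v i - b i) / (z - v i) * ∏ j ∈ s.erase i, (v i - b j) / (v i - v j) := by
  set f := Lagrange.nodal s b - Lagrange.nodal s v with hf
  have hdeg : f.degree < #s := by
    rw [← Lagrange.degree_nodal (v := b)]
    exact Polynomial.degree_sub_lt_left (by simp only [Lagrange.degree_nodal])
      Lagrange.nodal_ne_zero (by simp only [Lagrange.nodal_monic.leadingCoeff])
  have hnode : ∀ i ∈ s, f.eval (v i) = ∏ j ∈ s, (v i - b j) := fun i hi ↦ by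
    rw [hf, Polynomial.eval_sub, Lagrange.eval_nodal_at_node hi, sub_zero, Lagrange.eval_nodal]
  have hinterp := congrArg (Polynomial.eval z) (Lagrange.eq_interpolate hv hdeg)
  rw [Lagrange.eval_interpolate_not_at_node _ hz, hf, Polynomial.eval_sub, Lagrange.eval_nodal,
    Lagrange.eval_nodal] at hinterp
  have hden : ∏ i ∈ s, (z - v i) ≠ 0 := prod_ne_zero_iff.2 fun i hi ↦ sub_ne_zero.2 (hz i hi)
  rw [prod_div_distrib, ← sub_eq_iff_eq_add', div_sub_one hden, hinterp,
    mul_div_cancel_left₀ _ hden]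
  refine sum_congr rfl fun i hi ↦ ?_
  rw [hnode i hi, Lagrange.nodalWeight, ← mul_prod_erase s _ hi, prod_div_distrib, prod_inv_distrib]
  ring

theorem prod_mul_div_mul_eq_one_add_sum [Fintype ι] {u v a b : ι → K} {z : K}
    (hu : Injective u) (hv : Injective v) (huv : ∀ i j, u i ≠ v j)
    (hzu : ∀ i, z ≠ u i) (hzv : ∀ i, z ≠ v i) :
    ∏ i, ((z - a i) * (z - b i)) / ((z - u i) * (z - v i)) =
      1 + ∑ i,
        ((u i - a i) / (z - u i) * ((u i - b i) / (u i - v i)) *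
            ∏ j ∈ univ.erase i, ((u i - a j) * (u i - b j)) / ((u i - u j) * (u i - v j)) +
          (v i - b i) / (z - v i) * ((v i - a i) / (v i - u i)) *
            ∏ j ∈ univ.erase i, ((v i - a j) * (v i - b j)) / ((v i - u j) * (v i - v j))) := by
  have erase_inl (i : ι) : (univ.erase (Sum.inl i) : Finset (ι ⊕ ι)) =
      (univ.erase i).disjSum univ := by
    ext (_ | _) <;> simp
  have erase_inr (i : ι) : (univ.erase (Sum.inr i) : Finset (ι ⊕ ι)) =
      univ.disjSum (univ.erase i) := by
    ext (_ | _) <;> simp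
  have hsum := prod_sub_div_sub_eq_one_add_sum (s := univ) (v := Sum.elim u v)
    (b := Sum.elim a b) (hu.sumElim hv huv).injOn (by simpa using ⟨hzu, hzv⟩)
  simp only [Fintype.prod_sum_type, Fintype.sum_sum_type, Sum.elim_inl, Sum.elim_inr, erase_inl,
    erase_inr, prod_disjSum, ← prod_mul_distrib, ← sum_add_distrib] at hsum
  simp only [mul_div_mul_comm]
  rw [hsum]
  congr 1
  refine sum_congr rfl fun i _ ↦ ?_
  rw [← mul_prod_erase univ (fun j ↦ (u i - b j) / (u i - v j)) (mem_univ i),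
    ← mul_prod_erase univ (fun j ↦ (v i - a j) / (v i - u j)) (mem_univ i)]
  simp only [prod_mul_distrib]
  ring

end PartialFractions

section LetterPhi

variable {K : Type*} [Field K] {q t : K}

/-- The factor `Φ(a : b)` attached to two single letters; `Φ(A : B)` is the product of these
factors over `a ∈ A` and `b ∈ B`. -/
def letterPhi (q t a b : K) : K :=
  ((a - t * b / q) * (a - b / t)) / ((a - b) * (a - b / q))

theorem letterPhi_div_left (hq : q ≠ 0) (ht : t ≠ 0) (a b : K) :
    letterPhi q t (a / q) b = letterPhi q t b a := by
  have hnum : (a / q - t * b / q) * (a / q - b / t) =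
      q⁻¹ * ((b - t * a / q) * (b - a / t)) := by field_simp; ring
  have hden : (a / q - b) * (a / q - b / q) = q⁻¹ * ((b - a) * (b - a / q)) := by
    field_simp; ring
  rw [letterPhi, letterPhi, hnum, hden, mul_div_mul_left _ _ (inv_ne_zero hq)]

theorem letterPhi_zero_left (hq : q ≠ 0) (ht : t ≠ 0) {b : K} (hb : b ≠ 0) :
    letterPhi q t 0 b = 1 := by
  simp only [letterPhi, zero_sub]
  field_simp

theorem letterPhi_one {a b : K} (hab : a ≠ b) (haqb : a ≠ b / q) : letterPhi q 1 a b = 1 := by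
  rw [letterPhi, one_mul, div_one, mul_comm,
    div_self (mul_ne_zero (sub_ne_zero.2 hab) (sub_ne_zero.2 haqb))]

theorem letterPhi_self (hq : q ≠ 0) {a b : K} (hab : a ≠ b) (haqb : a ≠ b / q) :
    letterPhi q q a b = 1 := by
  rw [letterPhi, mul_div_cancel_left₀ _ hq,
    div_self (mul_ne_zero (sub_ne_zero.2 hab) (sub_ne_zero.2 haqb))]

variable {ι : Type*} [Fintype ι] [DecidableEq ι] {x : ι → K}

theorem prod_letterPhi_sub_one_eq_sum (hq : q ≠ 0) (ht : t ≠ 0) (hx : Injective x)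
    (hxq : ∀ i j, x i ≠ x j / q) {z : K} (hz : ∀ i, z ≠ x i) (hzq : ∀ i, z ≠ x i / q) :
    ∏ i, letterPhi q t z (x i) - 1 =
      (1 - t) / (1 - q) * ∑ i,
        (((z - x i / t) / (z - x i / q) - 1) *
            ∏ j ∈ univ.erase i, letterPhi q t (x j) (x i) -
          ((z - q * x i / t) / (z - x i) - 1) *
            ∏ j ∈ univ.erase i, letterPhi q t (x i) (x j)) := by
  have hpoles := prod_mul_div_mul_eq_one_add_sum (a := fun i ↦ t * x i / q)
    (b := fun i ↦ x i / t) hx (fun i j h ↦ hx ((div_left_inj' hq).1 h)) hxq hz hzq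
  simp only [← letterPhi.eq_def, letterPhi_div_left hq ht] at hpoles
  rw [hpoles, add_sub_cancel_left, mul_sum]
  refine sum_congr rfl fun i _ ↦ ?_
  have hzi : z - x i ≠ 0 := sub_ne_zero.2 (hz i)
  have hzqi : z - x i / q ≠ 0 := sub_ne_zero.2 (hzq i)
  have hxi : x i ≠ 0 := fun h ↦ hxq i i (by simp [h])
  have hq1 : 1 - q ≠ 0 := sub_ne_zero.2 fun h ↦ hxq i i (by simp [← h])
  have hxxq : x i - x i / q = -(x i * (1 - q) / q) := by field_simp; ring
  have residue_at_x : (x i - t * x i / q) / (z - x i) * ((x i - x i / t) / (x i - x i / q)) =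
      -((1 - t) / (1 - q) * ((z - q * x i / t) / (z - x i) - 1)) := by
    rw [hxxq, div_sub_one hzi]
    field_simp
    ring
  have residue_at_xq : (x i / q - x i / t) / (z - x i / q) *
      ((x i / q - t * x i / q) / (x i / q - x i)) =
      (1 - t) / (1 - q) * ((z - x i / t) / (z - x i / q) - 1) := by
    rw [← neg_sub (x i), hxxq, div_sub_one hzqi]
    field_simp
    ring
  rw [residue_at_x, residue_at_xq]
  ring

theorem sum_prod_letterPhi_comm (hq : q ≠ 0) (ht : t ≠ 0) (hx : Injective x)
    (hxq : ∀ i j, x i ≠ x j / q) :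
    ∑ i, ∏ j ∈ univ.erase i, letterPhi q t (x j) (x i) =
      ∑ i, ∏ j ∈ univ.erase i, letterPhi q t (x i) (x j) := by
  obtain hι | ⟨⟨i₀⟩⟩ := isEmpty_or_nonempty ι
  · simp only [univ_eq_empty, sum_empty]
  -- The expansion at `z = 0` carries the factor `(1 - t) (q/t - 1)`, so it says nothing for
  -- `t = 1` and `t = q`; in these two cases every factor `Φ(x_i : x_j)` is `1`.
  by_cases hconst : ∀ i j, i ≠ j → letterPhi q t (x i) (x j) = 1
  · refine sum_congr rfl fun i _ ↦ prod_congr rfl fun j hj ↦ ?_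
    rw [hconst j i (ne_of_mem_erase hj), hconst i j (ne_of_mem_erase hj).symm]
  have ht1 : t ≠ 1 := by
    rintro rfl
    exact hconst fun i j hij ↦ letterPhi_one (hx.ne hij) (hxq i j)
  have htq : t ≠ q := by
    rintro rfl
    exact hconst fun i j hij ↦ letterPhi_self hq (hx.ne hij) (hxq i j)
  have hq1 : q ≠ 1 := fun h ↦ hxq i₀ i₀ (by simp [h])
  have hx0 (i : ι) : x i ≠ 0 := fun h ↦ hxq i i (by simp [h])
  have hw (i : ι) : (0 - x i / t) / (0 - x i / q) = q / t := by
    have := hx0 i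
    rw [zero_sub, zero_sub, neg_div_neg_eq]
    field_simp
  have hW (i : ι) : (0 - q * x i / t) / (0 - x i) = q / t := by
    have := hx0 i
    rw [zero_sub, zero_sub, neg_div_neg_eq]
    field_simp
  have hzero := prod_letterPhi_sub_one_eq_sum hq ht hx hxq (fun i ↦ (hx0 i).symm)
    (fun i ↦ (div_ne_zero (hx0 i) hq).symm)
  simp only [letterPhi_zero_left hq ht (hx0 _), prod_const_one, sub_self, hw, hW, ← mul_sub,
    ← mul_sum, sum_sub_distrib] at hzero
  have hcoeff : (1 - t) / (1 - q) ≠ 0 :=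
    div_ne_zero (sub_ne_zero.2 ht1.symm) (sub_ne_zero.2 hq1.symm)
  have hqt : q / t - 1 ≠ 0 := sub_ne_zero.2 fun h ↦ htq ((div_eq_one_iff_eq ht).1 h).symm
  simpa [hcoeff, hqt, sub_eq_zero] using hzero.symm

theorem one_variable_residue_expansion_general (hq : q ≠ 0) (ht : t ≠ 0) (hx : Injective x)
    (hxq : ∀ i j, x i ≠ x j / q) {z : K} (hz : ∀ i, z ≠ x i) (hzq : ∀ i, z ≠ x i / q) :
    ∏ i, letterPhi q t z (x i) - 1 =
      (1 - t) / (1 - q) * ∑ i,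
        ((z - x i / t) / (z - x i / q) * ∏ j ∈ univ.erase i, letterPhi q t (x j) (x i) -
          (z - q * x i / t) / (z - x i) * ∏ j ∈ univ.erase i, letterPhi q t (x i) (x j)) := by
  rw [prod_letterPhi_sub_one_eq_sum hq ht hx hxq hz hzq]
  simp only [sub_one_mul, sum_sub_distrib, sum_prod_letterPhi_comm hq ht hx hxq]
  ring

end LetterPhi

section Indeterminates

open MvPolynomial

variable {σ R : Type*} (K : Type*) [CommRing R] [Nontrivial R] [Field K]
  [Algebra (MvPolynomial σ R) K] [FaithfulSMul (MvPolynomial σ R) K]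

theorem algebraMap_X_injective :
    Injective fun a : σ ↦ algebraMap (MvPolynomial σ R) K (X a) :=
  (FaithfulSMul.algebraMap_injective _ K).comp X_injective

theorem algebraMap_X_ne_zero (a : σ) : algebraMap (MvPolynomial σ R) K (X a) ≠ 0 :=
  (map_ne_zero_iff _ (FaithfulSMul.algebraMap_injective _ K)).2 (X_ne_zero a)

theorem algebraMap_X_ne_div (a b c : σ) :
    algebraMap (MvPolynomial σ R) K (X a) ≠
      algebraMap (MvPolynomial σ R) K (X b) / algebraMap (MvPolynomial σ R) K (X c) := by
  rw [Ne, eq_div_iff (algebraMap_X_ne_zero K c), ← map_mul,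
    (FaithfulSMul.algebraMap_injective (MvPolynomial σ R) K).eq_iff]
  intro h
  have hdeg := ((isHomogeneous_X R a).mul (isHomogeneous_X R c)).inj_right
    (h ▸ isHomogeneous_X R b) (h ▸ X_ne_zero b)
  omega

end Indeterminates

/-- One-variable residue expansion:
`Φ(z : X) - 1 = ((1-t)/(1-q)) ∑_i ( w(z : x_i) Φ(X - x_i : x_i) - W(z : x_i) Φ(x_i : X - x_i) )`
where `w(z : x) = (z - x/t)/(z - x/q)`, `W(z : x) = (z - qx/t)/(z - x)`, and
`Φ(A : B) = ∏_{a∈A, b∈B} ((a - tb/q)(a - b/t))/((a - b)(a - b/q))`, as an identity of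
rational functions in `z, x_1, …, x_n, q, t`. -/
theorem one_variable_residue_expansion (n : ℕ) :
    (∏ i : Fin n,
        ((zv n - tv n * xv n i / qv n) * (zv n - xv n i / tv n)) /
          ((zv n - xv n i) * (zv n - xv n i / qv n))) - 1 =
      (1 - tv n) / (1 - qv n) *
        ∑ i : Fin n,
          (((zv n - xv n i / tv n) / (zv n - xv n i / qv n)) *
              ∏ j ∈ Finset.univ.erase i,
                ((xv n j - tv n * xv n i / qv n) * (xv n j - xv n i / tv n)) /
                  ((xv n j - xv n i) * (xv n j - xv n i / qv n)) -
            ((zv n - qv n * xv n i / tv n) / (zv n - xv n i)) *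
              ∏ j ∈ Finset.univ.erase i,
                ((xv n i - tv n * xv n j / qv n) * (xv n i - xv n j / tv n)) /
                  ((xv n i - xv n j) * (xv n i - xv n j / qv n))) :=
  one_variable_residue_expansion_general (algebraMap_X_ne_zero _ _)
    (algebraMap_X_ne_zero _ _) ((algebraMap_X_injective _).comp Sum.inl_injective)
    (fun _ _ ↦ algebraMap_X_ne_div _ _ _ _)
    (fun _ ↦ (algebraMap_X_injective _).ne Sum.inr_ne_inl) (fun _ ↦ algebraMap_X_ne_div _ _ _ _)
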